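/- Let A₁, Ã₁ ∈ ℝ^{m×r₁}, A₂, Ã₂ ∈ ℝ^{m×r₂}, and A₃, Ã₃ ∈ ℝ^{p×r₃} all have orthonormal columns, and let W, W̃ ∈ ℝ^{m×(p·m)} be arbitrary matrices (with columns indexed by Fin p × Fin m). Then ‖Ã₁ᵀ W̃ (Ã₃ ⊗ Ã₂) − A₁ᵀ W (A₃ ⊗ A₂)‖_F ≤ ‖W̃ − W‖_F + ‖W‖_F (‖Ã₁ − A₁‖_F + ‖Ã₂ − A₂‖_F + ‖Ã₃ − A₃‖_F). -/

import Mathlib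

open Matrix
open scoped Kronecker

/-- The Frobenius norm of a real matrix. -/
noncomputable def frobNorm {m n : Type*} [Fintype m] [Fintype n] (A : Matrix m n ℝ) : ℝ :=
  Real.sqrt (∑ i, ∑ j, (A i j) ^ 2)

/-!
Multiplying a matrix by `B` on either side increases its Frobenius norm at most by the factor `‖B‖`,
the spectral norm. Since `(A ⊗ B) vec X = vec (B X Aᵀ)`, applying this on both sides of `X` shows
that the spectral norm is submultiplicative for Kronecker products. Replacing the factors of
`A₁ᵀ W (A₃ ⊗ A₂)` by their perturbations one at a time, each term contains a single difference, and
every other factor matrix is a contraction.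
-/

section FrobeniusNorm

variable {l m n : Type*} [Fintype l] [Fintype m] [Fintype n]

lemma frobNorm_nonneg (A : Matrix m n ℝ) : 0 ≤ frobNorm A :=
  Real.sqrt_nonneg _

lemma frobNorm_transpose (A : Matrix m n ℝ) : frobNorm Aᵀ = frobNorm A :=
  congrArg Real.sqrt Finset.sum_comm

lemma frobNorm_eq_norm_vec (A : Matrix m n ℝ) : frobNorm A = ‖WithLp.toLp 2 A.vec‖ := by
  rw [← frobNorm_transpose, frobNorm, EuclideanSpace.norm_eq, Fintype.sum_prod_type]
  simp only [vec, transpose_apply, Real.norm_eq_abs, sq_abs]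

lemma frobNorm_add_le (A B : Matrix m n ℝ) : frobNorm (A + B) ≤ frobNorm A + frobNorm B := by
  simpa only [frobNorm_eq_norm_vec, vec_add, WithLp.toLp_add] using norm_add_le _ _

lemma frobNorm_sq_eq_sum_norm_row_sq (A : Matrix m n ℝ) :
    frobNorm A ^ 2 = ∑ i, ‖WithLp.toLp 2 (A i)‖ ^ 2 := by
  rw [frobNorm, Real.sq_sqrt (by positivity)]
  simp only [EuclideanSpace.real_norm_sq_eq]

lemma frobNorm_sq_eq_sum_norm_col_sq (A : Matrix m n ℝ) :
    frobNorm A ^ 2 = ∑ j, ‖WithLp.toLp 2 (Aᵀ j)‖ ^ 2 := by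
  rw [← frobNorm_transpose, frobNorm_sq_eq_sum_norm_row_sq]

lemma norm_mulVec_le_frobNorm_mul_norm (A : Matrix m n ℝ) (x : n → ℝ) :
    ‖WithLp.toLp 2 (A *ᵥ x)‖ ≤ frobNorm A * ‖WithLp.toLp 2 x‖ := by
  refine le_of_sq_le_sq ?_ (mul_nonneg (frobNorm_nonneg A) (norm_nonneg _))
  rw [mul_pow, frobNorm_sq_eq_sum_norm_row_sq, Finset.sum_mul, EuclideanSpace.real_norm_sq_eq]
  gcongr with i
  simpa only [EuclideanSpace.real_norm_sq_eq, mulVec, dotProduct] using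
    Finset.sum_mul_sq_le_sq_mul_sq _ (A i) x

end FrobeniusNorm

section SpectralNorm

open scoped Matrix.Norms.L2Operator

lemma l2_opNorm_le_one_of_conjTranspose_mul_self {𝕜 m n : Type*} [RCLike 𝕜]
    [Fintype m] [Fintype n] [DecidableEq n] {A : Matrix m n 𝕜} (hA : Aᴴ * A = 1) : ‖A‖ ≤ 1 := by
  have norm_mul_self_le : ‖A‖ * ‖A‖ ≤ 1 := by
    rw [← l2_opNorm_conjTranspose_mul_self, hA, ← diagonal_one, l2_opNorm_diagonal]
    exact (pi_norm_const_le _).trans_eq norm_one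
  exact (le_abs_self _).trans (abs_le_one_iff_mul_self_le_one.mpr norm_mul_self_le)

lemma l2_opNorm_le_bound {𝕜 m n : Type*} [RCLike 𝕜] [Fintype m] [Fintype n]
    [DecidableEq n] (A : Matrix m n 𝕜) {C : ℝ} (hC : 0 ≤ C)
    (h : ∀ x : n → 𝕜, ‖WithLp.toLp 2 (A *ᵥ x)‖ ≤ C * ‖WithLp.toLp 2 x‖) : ‖A‖ ≤ C :=
  ContinuousLinearMap.opNorm_le_bound _ hC fun x => h x.ofLp

variable {k l m n : Type*} [Fintype k] [Fintype l] [Fintype m] [Fintype n]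

lemma l2_opNorm_le_frobNorm [DecidableEq n] (A : Matrix m n ℝ) : ‖A‖ ≤ frobNorm A :=
  l2_opNorm_le_bound A (frobNorm_nonneg A) (norm_mulVec_le_frobNorm_mul_norm A)

lemma l2_opNorm_transpose [DecidableEq m] [DecidableEq n] (A : Matrix m n ℝ) : ‖Aᵀ‖ = ‖A‖ := by
  rw [← conjTranspose_eq_transpose_of_trivial, l2_opNorm_conjTranspose]

lemma frobNorm_mul_le_l2_opNorm_mul [DecidableEq m] (A : Matrix l m ℝ) (B : Matrix m n ℝ) :
    frobNorm (A * B) ≤ ‖A‖ * frobNorm B := by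
  refine le_of_sq_le_sq ?_ (mul_nonneg (norm_nonneg A) (frobNorm_nonneg B))
  calc frobNorm (A * B) ^ 2
      = ∑ j, ‖WithLp.toLp 2 (A *ᵥ Bᵀ j)‖ ^ 2 := frobNorm_sq_eq_sum_norm_col_sq (A * B)
    _ ≤ ∑ j, (‖A‖ * ‖WithLp.toLp 2 (Bᵀ j)‖) ^ 2 := by
        gcongr with j
        exact l2_opNorm_mulVec A (WithLp.toLp 2 (Bᵀ j))
    _ = (‖A‖ * frobNorm B) ^ 2 := by
        simp only [mul_pow, frobNorm_sq_eq_sum_norm_col_sq, Finset.mul_sum]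

lemma frobNorm_mul_le_mul_l2_opNorm [DecidableEq n] (A : Matrix l m ℝ) (B : Matrix m n ℝ) :
    frobNorm (A * B) ≤ frobNorm A * ‖B‖ := by
  classical
  rw [← frobNorm_transpose, transpose_mul, ← frobNorm_transpose A, ← l2_opNorm_transpose B,
    mul_comm]
  exact frobNorm_mul_le_l2_opNorm_mul Bᵀ Aᵀ

lemma frobNorm_mul_mul_le [DecidableEq l] [DecidableEq n] (A : Matrix k l ℝ)
    (X : Matrix l m ℝ) (B : Matrix m n ℝ) :
    frobNorm (A * X * B) ≤ ‖A‖ * frobNorm X * ‖B‖ := by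
  grw [frobNorm_mul_le_mul_l2_opNorm, frobNorm_mul_le_l2_opNorm_mul]

lemma l2_opNorm_kronecker_le [DecidableEq l] [DecidableEq n] (A : Matrix k l ℝ)
    (B : Matrix m n ℝ) : ‖A ⊗ₖ B‖ ≤ ‖A‖ * ‖B‖ := by
  classical
  refine l2_opNorm_le_bound _ (by positivity) fun x => ?_
  obtain ⟨X, rfl⟩ := vec_bijective.surjective x
  rw [kronecker_mulVec_vec, ← frobNorm_eq_norm_vec, ← frobNorm_eq_norm_vec]
  calc frobNorm (B * X * Aᵀ)
      ≤ ‖B‖ * frobNorm X * ‖Aᵀ‖ := frobNorm_mul_mul_le B X Aᵀ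
    _ = ‖A‖ * ‖B‖ * frobNorm X := by rw [l2_opNorm_transpose]; ring

lemma l2_opNorm_kronecker_sub_kronecker_le [DecidableEq l] [DecidableEq n]
    (A A' : Matrix k l ℝ) (B B' : Matrix m n ℝ) :
    ‖A' ⊗ₖ B' - A ⊗ₖ B‖ ≤ ‖A'‖ * ‖B' - B‖ + ‖A' - A‖ * ‖B‖ := by
  have telescope : A' ⊗ₖ B' - A ⊗ₖ B = A' ⊗ₖ (B' - B) + (A' - A) ⊗ₖ B := by
    rw [sub_eq_iff_eq_add, add_assoc, ← add_kronecker, sub_add_cancel, ← kronecker_add,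
      sub_add_cancel]
  rw [telescope]
  exact norm_add_le_of_le (l2_opNorm_kronecker_le _ _) (l2_opNorm_kronecker_le _ _)

lemma frobNorm_mul_mul_sub_mul_mul_le [DecidableEq l] [DecidableEq n]
    (A A' : Matrix k l ℝ) (X X' : Matrix l m ℝ) (B B' : Matrix m n ℝ) :
    frobNorm (A' * X' * B' - A * X * B) ≤
      ‖A'‖ * frobNorm (X' - X) * ‖B'‖ + ‖A' - A‖ * frobNorm X * ‖B'‖ +
        ‖A‖ * frobNorm X * ‖B' - B‖ := by
  have telescope : A' * X' * B' - A * X * B =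
      A' * (X' - X) * B' + (A' - A) * X * B' + A * X * (B' - B) := by
    simp only [Matrix.mul_sub, Matrix.sub_mul]
    abel
  grw [telescope, frobNorm_add_le, frobNorm_add_le, frobNorm_mul_mul_le, frobNorm_mul_mul_le,
    frobNorm_mul_mul_le]

theorem core_matricization_perturbation_general {m n p r₁ r₂ r₃ : Type*}
    [Fintype m] [Fintype n] [Fintype p] [Fintype r₁] [Fintype r₂] [Fintype r₃]
    [DecidableEq r₁] [DecidableEq r₂] [DecidableEq r₃]
    {A₁ At₁ : Matrix m r₁ ℝ} {A₂ At₂ : Matrix n r₂ ℝ} {A₃ At₃ : Matrix p r₃ ℝ}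
    (hA₁ : ‖A₁‖ ≤ 1) (hAt₁ : ‖At₁‖ ≤ 1) (hA₂ : ‖A₂‖ ≤ 1) (hAt₂ : ‖At₂‖ ≤ 1) (hAt₃ : ‖At₃‖ ≤ 1)
    (W Wt : Matrix m (p × n) ℝ) :
    frobNorm (At₁ᵀ * Wt * (At₃ ⊗ₖ At₂) - A₁ᵀ * W * (A₃ ⊗ₖ A₂)) ≤
      frobNorm (Wt - W) + frobNorm W * (‖At₁ - A₁‖ + ‖At₂ - A₂‖ + ‖At₃ - A₃‖) := by
  classical
  have norm_kronecker : ‖At₃ ⊗ₖ At₂‖ ≤ 1 :=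
    (l2_opNorm_kronecker_le At₃ At₂).trans (mul_le_one₀ hAt₃ (norm_nonneg _) hAt₂)
  have norm_kronecker_sub : ‖At₃ ⊗ₖ At₂ - A₃ ⊗ₖ A₂‖ ≤ ‖At₂ - A₂‖ + ‖At₃ - A₃‖ := by
    grw [l2_opNorm_kronecker_sub_kronecker_le, hAt₃, hA₂, one_mul, mul_one]
  have W_nonneg := frobNorm_nonneg W
  have dW_nonneg := frobNorm_nonneg (Wt - W)
  calc frobNorm (At₁ᵀ * Wt * (At₃ ⊗ₖ At₂) - A₁ᵀ * W * (A₃ ⊗ₖ A₂))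
      ≤ ‖At₁‖ * frobNorm (Wt - W) * ‖At₃ ⊗ₖ At₂‖ + ‖At₁ - A₁‖ * frobNorm W * ‖At₃ ⊗ₖ At₂‖ +
          ‖A₁‖ * frobNorm W * ‖At₃ ⊗ₖ At₂ - A₃ ⊗ₖ A₂‖ := by
        simpa only [← transpose_sub, l2_opNorm_transpose] using
          frobNorm_mul_mul_sub_mul_mul_le A₁ᵀ At₁ᵀ W Wt (A₃ ⊗ₖ A₂) (At₃ ⊗ₖ At₂)
    _ ≤ 1 * frobNorm (Wt - W) * 1 + ‖At₁ - A₁‖ * frobNorm W * 1 +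
          1 * frobNorm W * (‖At₂ - A₂‖ + ‖At₃ - A₃‖) := by
        gcongr
    _ = frobNorm (Wt - W) + frobNorm W * (‖At₁ - A₁‖ + ‖At₂ - A₂‖ + ‖At₃ - A₃‖) := by
        ring

end SpectralNorm

/-- Telescoping perturbation bound for the recovered core matricization
`G₍₁₎ = A₁ᵀ W (A₃ ⊗ A₂)`: if all factor matrices have orthonormal columns, then
`‖Ã₁ᵀ W̃ (Ã₃ ⊗ Ã₂) − A₁ᵀ W (A₃ ⊗ A₂)‖_F
  ≤ ‖W̃ − W‖_F + ‖W‖_F (‖Ã₁ − A₁‖_F + ‖Ã₂ − A₂‖_F + ‖Ã₃ − A₃‖_F)`. -/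
theorem core_matricization_perturbation
    (m p r₁ r₂ r₃ : ℕ)
    (A₁ At₁ : Matrix (Fin m) (Fin r₁) ℝ)
    (A₂ At₂ : Matrix (Fin m) (Fin r₂) ℝ)
    (A₃ At₃ : Matrix (Fin p) (Fin r₃) ℝ)
    (hA₁ : A₁ᵀ * A₁ = 1) (hAt₁ : At₁ᵀ * At₁ = 1)
    (hA₂ : A₂ᵀ * A₂ = 1) (hAt₂ : At₂ᵀ * At₂ = 1)
    (hA₃ : A₃ᵀ * A₃ = 1) (hAt₃ : At₃ᵀ * At₃ = 1)
    (W Wt : Matrix (Fin m) (Fin p × Fin m) ℝ) :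
    frobNorm (At₁ᵀ * Wt * (At₃ ⊗ₖ At₂) - A₁ᵀ * W * (A₃ ⊗ₖ A₂))
      ≤ frobNorm (Wt - W)
        + frobNorm W * (frobNorm (At₁ - A₁) + frobNorm (At₂ - A₂)
            + frobNorm (At₃ - A₃)) := by
  simp only [← conjTranspose_eq_transpose_of_trivial] at hA₁ hAt₁ hA₂ hAt₂ hAt₃
  have W_nonneg := frobNorm_nonneg W
  grw [← l2_opNorm_le_frobNorm (At₁ - A₁), ← l2_opNorm_le_frobNorm (At₂ - A₂),
    ← l2_opNorm_le_frobNorm (At₃ - A₃)]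
  refine core_matricization_perturbation_general ?_ ?_ ?_ ?_ ?_ W Wt <;>
    exact l2_opNorm_le_one_of_conjTranspose_mul_self ‹_›
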